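/- Let A be a subtracted centrally image partition regular ω×ω matrix and let B be a Milliken–Taylor ω×ω matrix. Then the diagonal sum ( A 0 ; 0 B ) is image partition regular: whenever ℕ is partitioned into finitely many classes, there exist x, y ∈ ℕ^ω such that all entries of Ax and all entries of By lie in one and the same class. -/

import Mathlib

/- `ℕ+` plays the role of the paper's `ℕ = {1,2,3,…}`.  `Ultrafilter ℕ+` is `βℕ`. -/

/-- Product of ultrafilters: `U ∈ umul p q ↔ {x | {y | x*y ∈ U} ∈ q} ∈ p`. -/
def umul (p q : Ultrafilter ℕ+) : Ultrafilter ℕ+ :=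
  p.bind fun x => q.map fun y => x * y

/-- Sum of ultrafilters: `U ∈ uadd p q ↔ {x | {y | x+y ∈ U} ∈ q} ∈ p`. -/
def uadd (p q : Ultrafilter ℕ+) : Ultrafilter ℕ+ :=
  p.bind fun x => q.map fun y => x + y

/-- The matrix-vector product `Ax` (computed in `ℚ`) of a row-finite matrix `A`
with a vector `x` of positive integers. -/
noncomputable def mulVecQ {ι κ : Type} (A : ι → κ → ℚ) (x : κ → ℕ+) : ι → ℚ :=
  fun i => ∑ᶠ j, A i j * ((x j : ℕ) : ℚ)

/-- All entries of the vector `y` are (positive) natural numbers lying in `P`. -/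
def entriesIn {ι : Type} (y : ι → ℚ) (P : Set ℕ+) : Prop :=
  ∀ i, ∃ n ∈ P, y i = ((n : ℕ) : ℚ)

/-- `A` is image partition regular: for every finite coloring of `ℕ` there is
a vector `x` over `ℕ` all entries of whose image `Ax` are monochromatic. -/
def IPR {ι κ : Type} (A : ι → κ → ℚ) : Prop :=
  ∀ (r : ℕ) (c : ℕ+ → Fin r), ∃ (k : Fin r) (x : κ → ℕ+),
    entriesIn (mulVecQ A x) {n | c n = k}

/-- `I(A) = {p ∈ βℕ : for every P ∈ p there is x over ℕ with all entries of Ax in P}`. -/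
def ISet {ι κ : Type} (A : ι → κ → ℚ) : Set (Ultrafilter ℕ+) :=
  {p | ∀ P ∈ p, ∃ x : κ → ℕ+, entriesIn (mulVecQ A x) P}

/-- A left ideal of `(βℕ,+)`: a nonempty set `L` with `βℕ + L ⊆ L`. -/
def IsLeftIdealAdd (L : Set (Ultrafilter ℕ+)) : Prop :=
  L.Nonempty ∧ ∀ p q, q ∈ L → uadd p q ∈ L

/-- A minimal left ideal of `(βℕ,+)`. -/
def IsMinimalLeftIdealAdd (L : Set (Ultrafilter ℕ+)) : Prop :=
  IsLeftIdealAdd L ∧ ∀ L', IsLeftIdealAdd L' → L' ⊆ L → L' = L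

/-- `K(βℕ,+)`, the union of all minimal left ideals of `(βℕ,+)`. -/
def KAdd : Set (Ultrafilter ℕ+) :=
  {p | ∃ L, IsMinimalLeftIdealAdd L ∧ p ∈ L}

/-- `C ⊆ ℕ` is central in `(ℕ,+)`: `C` belongs to some idempotent of `K(βℕ,+)`. -/
def IsCentralAdd (C : Set ℕ+) : Prop :=
  ∃ p : Ultrafilter ℕ+, uadd p p = p ∧ p ∈ KAdd ∧ C ∈ p

/-- An `ω×ω` matrix is centrally image partition regular if every additively central
set contains the entries of an image `Ax`, `x ∈ ℕ^ω`. -/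
def CentrallyIPR (A : ℕ → ℕ → ℚ) : Prop :=
  ∀ C : Set ℕ+, IsCentralAdd C → ∃ x : ℕ → ℕ+, entriesIn (mulVecQ A x) C

/-- Definition 2.11: `A` is subtracted centrally image partition regular if
(1) no row of `A` is zero, (2) `A` is row-finite, and (3) for some `n ∈ ω`, `k ≥ 1`,
the rows of the submatrix formed by columns `n, n+1, …, n+k-1` are precisely the
rows of a finite image partition regular matrix, while the remaining columns form a
centrally image partition regular matrix. -/
def SubtractedCentrallyIPR (A : ℕ → ℕ → ℚ) : Prop :=
  (∀ i, ∃ j, A i j ≠ 0) ∧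
  (∀ i, {j | A i j ≠ 0}.Finite) ∧
  ∃ (n k : ℕ), 0 < k ∧
    (∃ (u : ℕ) (F : Fin u → Fin k → ℚ), IPR F ∧
      Set.range (fun i => fun t : Fin k => A i (n + (t : ℕ))) = Set.range F) ∧
    CentrallyIPR (fun i j => A i (if j < n then j else j + k))

/-- `compress l` is `c(l)`: delete all zeros, then delete every entry equal to its
predecessor. -/
def compress (l : List ℕ) : List ℕ :=
  (l.filter (· ≠ 0)).destutter (· ≠ ·)

/-- The infinite row `r` (eventually zero) has compressed form `a`. -/
def rowCompressedTo (r : ℕ → ℕ) (a : List ℕ) : Prop :=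
  ∃ N, (∀ j, N ≤ j → r j = 0) ∧ compress ((List.range N).map r) = a

/-- Definition 2.15: `M` is a Milliken–Taylor matrix if each row of `M` has finitely
many nonzero entries and, for some finite compressed sequence `a ≠ []`, the rows of
`M` are precisely all row vectors `r ∈ ω^ω` with `c(r) = a`. -/
def MillikenTaylor (M : ℕ → ℕ → ℕ) : Prop :=
  (∀ i, {j | M i j ≠ 0}.Finite) ∧
  ∃ a : List ℕ, a ≠ [] ∧ compress a = a ∧
    (∀ i, rowCompressedTo (M i) a) ∧
    (∀ r : ℕ → ℕ, rowCompressedTo r a → ∃ i, M i = r)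

/-!
Fix an idempotent `p` in the smallest ideal of `βℕ` and let `a = [a₁, …, aₘ]` be the compressed
sequence of `B`. Some colour class `P` belongs to `a₁ p + ⋯ + aₘ p`, and since `p + p = p` the rows
of `B` can be satisfied in `P` by choosing the terms of `y` one at a time: a term may always either
continue the current block or start the next one.

For the finite part `F` of `A`, the partition regularity of `F` forces `F` to satisfy the first
entries condition, and so every member of `p` contains an image of `F`. Hence some idempotent `q` on
vectors is mapped onto `p` by each row of `F`, and a vector `v` chosen along `a₁ q + ⋯ + aₘ q` has
its image in `P`. By idempotence this stays true after adding a further `aₘ p` to every entry, and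
`aₘ p` is again a minimal idempotent: the numbers `m` with `Fv + m` in `P` form a central set, which
contains an image of the remaining columns of `A`.
-/

open Filter

attribute [local instance] Ultrafilter.addSemigroup

section UltrafilterSum

variable {M N : Type*}

theorem map_add_ultrafilter [AddSemigroup M] [AddSemigroup N] {Φ : Type*} [FunLike Φ M N]
    [AddHomClass Φ M N] (φ : Φ) (p q : Ultrafilter M) :
    (p + q).map φ = p.map φ + q.map φ := by
  refine Ultrafilter.coe_injective (Filter.ext' fun P => ?_)
  simp only [Ultrafilter.eventually_add, Ultrafilter.coe_map, eventually_map, map_add]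

theorem eventually_map_eq_zero_of_idempotent [AddSemigroup M] [AddGroup N] [Finite N]
    {Φ : Type*} [FunLike Φ M N] [AddHomClass Φ M N] (φ : Φ) {p : Ultrafilter M}
    (hp : p + p = p) : ∀ᶠ x in p, φ x = 0 := by
  obtain ⟨c, hc⟩ : ∃ c, ∀ᶠ x in p, φ x = c :=
    Ultrafilter.eventually_exists_iff.1 (.of_forall fun x => ⟨φ x, rfl⟩)
  have hcc : ∀ᶠ x in p, ∀ᶠ y in p, φ (x + y) = c :=
    (Ultrafilter.eventually_add p p (φ · = c)).1 (by rwa [hp])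
  obtain ⟨x, hxy, hx⟩ := (hcc.and hc).exists
  obtain ⟨y, hxy, hy⟩ := (hxy.and hc).exists
  rw [map_add, hx, hy, add_eq_left] at hxy
  rwa [hxy] at hc

end UltrafilterSum

section MinimalIdempotents

theorem isLeftIdealAdd_range_add (p : Ultrafilter ℕ+) : IsLeftIdealAdd (Set.range (· + p)) :=
  ⟨⟨_, p, rfl⟩, by rintro s _ ⟨r, rfl⟩; exact ⟨s + r, add_assoc s r p⟩⟩

theorem mem_KAdd_iff {p : Ultrafilter ℕ+} : p ∈ KAdd ↔ ∀ q, ∃ r, r + (q + p) = p := by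
  constructor
  · rintro ⟨L, ⟨hL, hmin⟩, hpL⟩ q
    have hrange : Set.range (· + (q + p)) = L :=
      hmin _ (isLeftIdealAdd_range_add (q + p)) <|
        Set.range_subset_iff.2 fun _ => hL.2 _ _ (hL.2 _ _ hpL)
    exact hrange.ge hpL
  · intro h
    have hpL : p ∈ Set.range (· + p) := by
      obtain ⟨r, hr⟩ := h p
      exact ⟨r + p, (add_assoc r p p).trans hr⟩
    refine ⟨Set.range (· + p), ⟨isLeftIdealAdd_range_add p, fun L hL hLp => hLp.antisymm ?_⟩, hpL⟩
    obtain ⟨x, hx⟩ := hL.1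
    obtain ⟨q, rfl⟩ := hLp hx
    obtain ⟨r, hr⟩ := h q
    rintro _ ⟨s, rfl⟩
    exact hL.2 s p (hr ▸ hL.2 r _ hx)

theorem exists_minimal_isClosed_isLeftIdealAdd :
    ∃ L, Minimal (fun L : Set (Ultrafilter ℕ+) => IsClosed L ∧ IsLeftIdealAdd L) L := by
  have hchain : ∀ c ⊆ {L : Set (Ultrafilter ℕ+) | IsClosed L ∧ IsLeftIdealAdd L},
      IsChain (· ⊆ ·) c → c.Nonempty →
        ∃ L ∈ {L | IsClosed L ∧ IsLeftIdealAdd L}, ∀ s ∈ c, L ⊆ s := by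
    intro c hcS hc hne
    have := hne.to_subtype
    have hc' : IsChain (· ⊇ ·) c := hc.symm
    exact ⟨⋂₀ c, ⟨isClosed_sInter fun L hL => (hcS hL).1,
      IsCompact.nonempty_sInter_of_directed_nonempty_isCompact_isClosed hc'.directedOn
        (fun L hL => (hcS hL).2.1) (fun L hL => (hcS hL).1.isCompact) (fun L hL => (hcS hL).1),
      fun p q hq L hL => (hcS hL).2.2 p q (hq L hL)⟩, fun _ => Set.sInter_subset_of_mem⟩
  obtain ⟨L, -, hL⟩ := zorn_superset_nonempty _ hchain Set.univ
    ⟨isClosed_univ, ⟨pure 1, trivial⟩, fun _ _ _ => trivial⟩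
  exact ⟨L, hL⟩

theorem exists_idempotent_mem_KAdd : ∃ p : Ultrafilter ℕ+, p + p = p ∧ p ∈ KAdd := by
  obtain ⟨L, ⟨hclosed, hne, hideal⟩, hmin⟩ := exists_minimal_isClosed_isLeftIdealAdd
  obtain ⟨p, hpL, hp⟩ := exists_idempotent_in_compact_add_subsemigroup
    Ultrafilter.continuous_add_left L hne hclosed.isCompact fun x _ y hy => hideal x y hy
  refine ⟨p, hp, mem_KAdd_iff.2 fun q => ?_⟩
  have hqp : Set.range (· + (q + p)) ⊆ L :=
    Set.range_subset_iff.2 fun _ => hideal _ _ (hideal _ _ hpL)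
  exact hmin ⟨(isCompact_range (Ultrafilter.continuous_add_left _)).isClosed,
    isLeftIdealAdd_range_add (q + p)⟩ hqp hpL

theorem map_mul_mem_KAdd {p : Ultrafilter ℕ+} (hp : p ∈ KAdd) (e : ℕ+) :
    p.map (AddHom.mulLeft e) ∈ KAdd := by
  rw [mem_KAdd_iff] at hp ⊢
  intro q
  -- A translate of `q` lives on the multiples of `e`, hence is the image of some `q'`.
  obtain ⟨c, hc⟩ : ∃ c : Fin e, ∀ᶠ x : ℕ+ in q, (e : ℕ) ∣ c + 1 + x := by
    refine Ultrafilter.eventually_exists_iff.1 (.of_forall fun x => ?_)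
    have hlt := Nat.mod_lt (x : ℕ) e.pos
    refine ⟨⟨e - 1 - x % e, by omega⟩, 1 + x / e, ?_⟩
    have := Nat.div_add_mod (x : ℕ) e
    rw [mul_add, mul_one]
    dsimp only
    omega
  have hrange : Set.range (AddHom.mulLeft e) ∈ pure (Nat.succPNat c) + q := by
    change ∀ᶠ z in _, _
    rw [Ultrafilter.eventually_add]
    refine eventually_pure.2 (hc.mono fun x hx => ?_)
    have hdvd : e ∣ Nat.succPNat c + x := PNat.dvd_iff.2 hx
    obtain ⟨y, hy⟩ := hdvd
    exact ⟨y, hy.symm⟩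
  have hinj : Function.Injective (AddHom.mulLeft e) := mul_right_injective e
  obtain ⟨q', hq'⟩ : ∃ q' : Ultrafilter ℕ+,
      q'.map (AddHom.mulLeft e) = pure (Nat.succPNat c) + q :=
    ⟨Ultrafilter.comap _ hinj hrange, Ultrafilter.coe_injective (map_comap_of_mem hrange)⟩
  obtain ⟨r, hr⟩ := hp q'
  refine ⟨r.map (AddHom.mulLeft e) + pure (Nat.succPNat c), ?_⟩
  rw [add_assoc, ← add_assoc (pure _), ← hq', ← map_add_ultrafilter, ← map_add_ultrafilter, hr]

theorem exists_finset_forall_eventually_add_mem {p : Ultrafilter ℕ+} (hp : p ∈ KAdd)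
    {C : Set ℕ+} (hC : C ∈ p) :
    ∃ H : Finset ℕ+, ∀ x, ∃ h ∈ H, ∀ᶠ y in p, h + x + y ∈ C := by
  let U (h : ℕ+) : Set (Ultrafilter ℕ+) := {q | ∀ᶠ x in q, ∀ᶠ y in p, h + x + y ∈ C}
  have hcover : Set.univ ⊆ ⋃ h, U h := fun q _ => by
    obtain ⟨r, hr⟩ := mem_KAdd_iff.1 hp q
    have hC' : ∀ᶠ h in r, ∀ᶠ z in q + p, h + z ∈ C :=
      (Ultrafilter.eventually_add r (q + p) (· ∈ C)).1 (by rwa [hr])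
    obtain ⟨h, hh⟩ := hC'.exists
    have hqp := (Ultrafilter.eventually_add q p (h + · ∈ C)).1 hh
    simp only [← add_assoc] at hqp
    exact Set.mem_iUnion.2 ⟨h, hqp⟩
  obtain ⟨H, hH⟩ := isCompact_univ.elim_finite_subcover U
    (fun h => ultrafilter_isOpen_basic _) hcover
  refine ⟨H, fun x => ?_⟩
  obtain ⟨h, hhH, hh⟩ := Set.mem_iUnion₂.1 (hH (Set.mem_univ (pure x)))
  exact ⟨h, hhH, eventually_pure.1 hh⟩

end MinimalIdempotents

section CentralSetsTheorem

theorem sum_line_apply {ι κ M : Type*} [Fintype ι] [AddCommMonoid M]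
    (l : Combinatorics.Line κ ι) (f : κ → ι → M) (k : κ) :
    ∑ t, f (l k t) t
      = ∑ t, (l.idxFun t).elim 0 (f · t) + ∑ t with l.idxFun t = none, f k t := by
  rw [Finset.sum_filter, ← Finset.sum_add_distrib]
  refine Finset.sum_congr rfl fun t _ => ?_
  cases h : l.idxFun t <;> simp [h]

theorem exists_mem_forall_add_sum_mem {p : Ultrafilter ℕ+} (hp : p ∈ KAdd) {C : Set ℕ+}
    (hC : C ∈ p) {κ : Type*} [Finite κ] (f : κ → ℕ → ℤ) :
    ∃ s ∈ C, ∃ α : Finset ℕ, α.Nonempty ∧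
      ∀ k, ∃ n ∈ C, ((n : ℕ) : ℤ) = (s : ℕ) + ∑ t ∈ α, f k t := by
  obtain ⟨H, hH⟩ := exists_finset_forall_eventually_add_mem hp hC
  -- Words over `Option κ`: the letter `none` contributes `0`, so a monochromatic line yields `s` at
  -- `none` and the perturbed values at the `some k`, with `α` the set of active coordinates.
  obtain ⟨ι, _, hι⟩ := Combinatorics.Line.exists_mono_in_high_dimension (Option κ) H
  obtain ⟨g, hg⟩ := Countable.exists_injective_nat ι
  let f₀ (o : Option κ) (t : ι) : ℤ := o.elim 0 (f · (g t))
  obtain ⟨b, hb⟩ := (Set.finite_range fun w : ι → Option κ => ∑ t, f₀ (w t) t).bddBelow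
  have hval (w : ι → Option κ) : ∃ n : ℕ+, ((n : ℕ) : ℤ) = 1 - b + ∑ t, f₀ (w t) t := by
    have hbw : b ≤ ∑ t, f₀ (w t) t := hb ⟨w, rfl⟩
    exact ⟨⟨(1 - b + ∑ t, f₀ (w t) t).toNat, by omega⟩, by rw [PNat.mk_coe]; omega⟩
  choose val hval using hval
  choose col hcolH hcol using fun w => hH (val w)
  obtain ⟨l, c, hl⟩ := hι fun w => ⟨col w, hcolH w⟩
  have hmono (o : Option κ) : ∀ᶠ y in p, c + val (l o) + y ∈ C := by
    simpa only [← hl o] using hcol (l o)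
  obtain ⟨y, hy⟩ := (eventually_all.2 hmono).exists
  refine ⟨_, hy none, (Finset.univ.filter (l.idxFun · = none)).map ⟨g, hg⟩, ?_,
    fun k => ⟨_, hy (some k), ?_⟩⟩
  · obtain ⟨t, ht⟩ := l.proper
    exact ⟨g t, by simpa [hg.eq_iff] using ht⟩
  · have hnone : ∑ t with l.idxFun t = none, f₀ none t = 0 := Finset.sum_const_zero
    push_cast
    rw [hval, hval, sum_line_apply, sum_line_apply, hnone, Finset.sum_map]
    change _ + (_ + (_ + ∑ t with l.idxFun t = none, f k (g t))) + _ = _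
    simp only [Function.Embedding.coeFn_mk]
    ring

end CentralSetsTheorem

section Farkas

variable {𝕜 : Type*} [Field 𝕜] [LinearOrder 𝕜] [IsStrictOrderedRing 𝕜]

theorem nonneg_of_mem_hull {E : Type*} [AddCommMonoid E] [Module 𝕜 E]
    {s : Set (Module.Dual 𝕜 E)} {b : Module.Dual 𝕜 E} (hb : b ∈ PointedCone.hull 𝕜 s) {x : E}
    (hx : ∀ f ∈ s, 0 ≤ f x) : 0 ≤ b x := by
  have hle : PointedCone.hull 𝕜 s ≤ PointedCone.dual (Module.Dual.eval 𝕜 E) {x} :=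
    Submodule.span_le.2 fun f hf => by simpa using hx f hf
  exact hle hb rfl

theorem exists_mem_hull_comp_eq {E E' ι : Type*} [AddCommMonoid E] [Module 𝕜 E]
    [AddCommMonoid E'] [Module 𝕜 E'] {a : ι → Module.Dual 𝕜 E} {s : Set ι} {P : E' →ₗ[𝕜] E}
    {c : Module.Dual 𝕜 E'} (h : c ∈ PointedCone.hull 𝕜 ((fun i => a i ∘ₗ P) '' s)) :
    ∃ b ∈ PointedCone.hull 𝕜 (a '' s), b ∘ₗ P = c := by
  have hspan := Submodule.map_span (P.dualMap.restrictScalars {c : 𝕜 // 0 ≤ c}) (a '' s)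
  rw [Set.image_image] at hspan
  exact hspan.ge h

theorem mem_hull_of_forall_nonneg {E ι : Type*} [AddCommGroup E] [Module 𝕜 E] {s : Finset ι}
    {a : ι → Module.Dual 𝕜 E} {b : Module.Dual 𝕜 E}
    (h : ∀ x, (∀ i ∈ s, 0 ≤ a i x) → 0 ≤ b x) : b ∈ PointedCone.hull 𝕜 (a '' s) := by
  classical
  induction s using Finset.induction_on generalizing a b with
  | empty =>
    have hb : b = 0 := LinearMap.ext fun x =>
      le_antisymm (by simpa using h (-x) (by simp)) (h x (by simp))
    exact hb ▸ zero_mem _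
  | insert j s _ ih =>
    have hmono : PointedCone.hull 𝕜 (a '' s) ≤ PointedCone.hull 𝕜 (a '' ↑(insert j s)) :=
      Submodule.span_mono (Set.image_mono (by simp))
    by_cases hs : ∀ x, (∀ i ∈ s, 0 ≤ a i x) → 0 ≤ b x
    · exact hmono (ih hs)
    push Not at hs
    obtain ⟨v, hv, hbv⟩ := hs
    have hjv : a j v < 0 := by
      by_contra! hjv
      exact hbv.not_ge (h v (Finset.forall_mem_insert _ _ _ |>.2 ⟨hjv, hv⟩))
    -- Projecting along `v` onto the hyperplane `a j = 0` eliminates the constraint `a j`.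
    let P : E →ₗ[𝕜] E := LinearMap.id - (a j).smulRight ((a j v)⁻¹ • v)
    have hP (x : E) : P x = x - a j x • (a j v)⁻¹ • v := rfl
    have hbP : b ∘ₗ P ∈ PointedCone.hull 𝕜 ((fun i => a i ∘ₗ P) '' s) := ih fun x hx =>
      h _ (Finset.forall_mem_insert _ _ _ |>.2 ⟨by simp [hP, hjv.ne], hx⟩)
    obtain ⟨b', hb', hb'P⟩ := exists_mem_hull_comp_eq hbP
    have hb'v : 0 ≤ b' v := nonneg_of_mem_hull hb' (Set.forall_mem_image.2 hv)
    have hb : b = b' + ((a j v)⁻¹ * (b v - b' v)) • a j := LinearMap.ext fun x => by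
      have hx := LinearMap.congr_fun hb'P x
      simp only [LinearMap.comp_apply, hP, map_sub, map_smul, smul_eq_mul] at hx
      simp only [LinearMap.add_apply, LinearMap.smul_apply, smul_eq_mul]
      linear_combination -hx
    rw [hb]
    exact add_mem (hmono hb') (PointedCone.smul_mem _
      (mul_nonneg_of_nonpos_of_nonpos (inv_nonpos.2 hjv.le) (by linarith))
      (PointedCone.subset_hull (Set.mem_image_of_mem _ (by simp))))

open Matrix in
theorem exists_nonneg_mulVec_eq_of_forall_dotProduct_nonneg {m n : Type*} [Fintype m] [Fintype n]
    (A : Matrix m n 𝕜) (b : m → 𝕜) (h : ∀ y, 0 ≤ y ᵥ* A → 0 ≤ y ⬝ᵥ b) :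
    ∃ x, 0 ≤ x ∧ A *ᵥ x = b := by
  classical
  let L := dotProductBilin (m := m) 𝕜 𝕜 (A := 𝕜)
  have hb : L b ∈ PointedCone.hull 𝕜 ((fun j => L (Aᵀ j)) '' (Finset.univ : Finset n)) :=
    mem_hull_of_forall_nonneg fun y hy => (h y fun j => ?_).trans_eq (dotProduct_comm y b)
  · have hle : PointedCone.hull 𝕜 ((fun j => L (Aᵀ j)) '' (Finset.univ : Finset n))
        ≤ (PointedCone.positive 𝕜 (n → 𝕜)).map (L ∘ₗ A.mulVecLin) := by
      refine Submodule.span_le.2 ?_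
      rintro _ ⟨j, -, rfl⟩
      exact ⟨Pi.single j 1, Pi.single_nonneg.2 zero_le_one, congrArg L (mulVec_single_one A j)⟩
    obtain ⟨x, hx, hLx⟩ := hle hb
    exact ⟨x, hx, dotProduct_eq _ _ (LinearMap.congr_fun hLx)⟩
  · exact (hy j (Finset.mem_univ j)).trans_eq (dotProduct_comm _ _)

open Matrix Topology in
theorem eventually_exists_nonneg_mulVec_eq {m n : Type*} [Finite m] [Fintype n]
    [TopologicalSpace 𝕜] [OrderTopology 𝕜] (A : Matrix m n 𝕜) (b : m → 𝕜) :
    ∀ᶠ ε in 𝓝[>] 0, (∃ x, 0 ≤ x ∧ ∀ i, |(A *ᵥ x) i - b i| ≤ ε) → ∃ x, 0 ≤ x ∧ A *ᵥ x = b := by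
  have := Fintype.ofFinite m
  by_cases hb : ∀ y, 0 ≤ y ᵥ* A → 0 ≤ y ⬝ᵥ b
  · exact .of_forall fun _ _ => exists_nonneg_mulVec_eq_of_forall_dotProduct_nonneg A b hb
  push Not at hb
  obtain ⟨y, hyA, hyb⟩ := hb
  have hlim : Tendsto (fun ε => y ⬝ᵥ b + ε * ∑ i, |y i|) (𝓝[>] 0) (𝓝 (y ⬝ᵥ b)) := by
    refine (Continuous.tendsto' (by fun_prop) _ _ (by simp)).mono_left nhdsWithin_le_nhds
  filter_upwards [hlim.eventually_lt_const hyb] with ε hε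
  rintro ⟨x, hx, hAx⟩
  have hnonneg : 0 ≤ y ⬝ᵥ A *ᵥ x := by
    rw [dotProduct_mulVec]
    exact dotProduct_nonneg_of_nonneg hyA hx
  have hclose : y ⬝ᵥ (A *ᵥ x - b) ≤ ε * ∑ i, |y i| := by
    rw [Finset.mul_sum]
    refine Finset.sum_le_sum fun i _ => (le_abs_self _).trans ?_
    rw [abs_mul, mul_comm]
    exact mul_le_mul_of_nonneg_right (hAx i) (abs_nonneg _)
  rw [dotProduct_sub] at hclose
  linarith

open Matrix Topology in
theorem eventually_forall_exists_nonneg_dotProduct_eq_indicator {m n : Type*} [Finite m]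
    [Fintype n] [TopologicalSpace 𝕜] [OrderTopology 𝕜] (A : Matrix m n 𝕜) :
    ∀ᶠ ε in 𝓝[>] 0, ∀ S T : Set m,
      (∃ x, 0 ≤ x ∧ ∀ i ∈ S, |A i ⬝ᵥ x - T.indicator 1 i| ≤ ε) →
        ∃ x, 0 ≤ x ∧ ∀ i ∈ S, A i ⬝ᵥ x = T.indicator 1 i := by
  simp only [eventually_all]
  intro S T
  filter_upwards [eventually_exists_nonneg_mulVec_eq (A.submatrix ((↑) : S → m) id)
    fun i => T.indicator 1 i.1] with ε hε
  rintro ⟨x, hx, hAx⟩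
  obtain ⟨x', hx', hAx'⟩ := hε ⟨x, hx, fun i => hAx i i.2⟩
  exact ⟨x', hx', fun i hi => congrFun hAx' ⟨i, hi⟩⟩

end Farkas

section FirstEntries

variable {ι κ : Type}

/-- The map `x ↦ Fx` on vectors of natural numbers, as a homomorphism. -/
def imageHom [Fintype κ] (F : ι → κ → ℚ) : (κ → ℕ) →+ (ι → ℚ) :=
  (Matrix.mulVecLin F).toAddMonoidHom.comp ((Nat.castAddMonoidHom ℚ).compLeft κ)

theorem imageHom_apply [Fintype κ] (F : ι → κ → ℚ) (x : κ → ℕ) (i : ι) :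
    imageHom F x i = ∑ j, F i j * x j :=
  rfl

theorem mulVecQ_eq_imageHom [Fintype κ] (F : ι → κ → ℚ) (x : κ → ℕ+) :
    mulVecQ F x = imageHom F fun j => (x j : ℕ) :=
  funext fun _ => finsum_eq_sum_of_fintype _

theorem exists_pos_nat_forall_mul_eq_intCast {α : Type*} [Finite α] (f : α → ℚ) :
    ∃ d : ℕ, 0 < d ∧ ∀ a, ∃ z : ℤ, d * f a = z := by
  obtain ⟨b, hb⟩ := IsLocalization.exist_integer_multiples_of_finite (nonZeroDivisors ℤ) f
  refine ⟨(b : ℤ).natAbs, Int.natAbs_pos.2 (nonZeroDivisors.coe_ne_zero b), fun a => ?_⟩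
  obtain ⟨z, hz⟩ := hb a
  rw [algebraMap_int_eq, eq_intCast, zsmul_eq_mul] at hz
  refine ⟨(b : ℤ).sign * z, ?_⟩
  rw [Int.cast_mul, hz, ← mul_assoc, ← Int.cast_mul, Int.sign_mul_self, Int.cast_natCast]

theorem exists_pos_nat_forall_mul_eq_natCast {α : Type*} [Finite α] {f : α → ℚ} (hf : 0 ≤ f) :
    ∃ d : ℕ, 0 < d ∧ ∃ w : α → ℕ, ∀ a, d * f a = w a := by
  obtain ⟨d, hd, hz⟩ := exists_pos_nat_forall_mul_eq_intCast f
  choose z hz using hz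
  refine ⟨d, hd, fun a => (z a).toNat, fun a => ?_⟩
  have hza : (0 : ℚ) ≤ z a := hz a ▸ mul_nonneg d.cast_nonneg (hf a)
  rw [hz]
  exact_mod_cast (Int.toNat_of_nonneg (Int.cast_nonneg_iff.1 hza)).symm

theorem IPR.exists_clustered {F : ι → κ → ℚ} (hF : IPR F) {ε : ℚ} (hε : 0 < ε) :
    ∃ (x : κ → ℕ+) (y : ι → ℕ+) (ℓ : ι → ℕ), (∀ i, mulVecQ F x i = (y i : ℕ)) ∧
      (∀ i j, ℓ i = ℓ j → |(y i : ℚ) - y j| ≤ ε * y j) ∧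
      ∀ i j, ℓ i < ℓ j → (y i : ℚ) ≤ ε * y j := by
  -- Colour `n` by `⌊log n⌋` modulo `M + 1` to base `1 + ε`, where `(1 + ε) ^ M` exceeds `1 / ε`:
  -- in a colour class, different logarithms differ by more than `M`.
  have hε1 : 1 < 1 + ε := by linarith
  have hlog (n : ℕ+) : ∃ m : ℕ, (1 + ε) ^ m ≤ (n : ℚ) ∧ (n : ℚ) < (1 + ε) ^ (m + 1) :=
    exists_nat_pow_near (by exact_mod_cast n.pos) hε1
  choose g hg_le hg_lt using hlog
  obtain ⟨M, hM⟩ := pow_unbounded_of_one_lt (1 / ε) hε1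
  obtain ⟨k, x, hx⟩ := hF (M + 1) fun n => Fin.ofNat (M + 1) (g n)
  choose y hyk hxy using hx
  have hmod (i j : ι) : g (y i) ≡ g (y j) [MOD M + 1] :=
    congrArg Fin.val ((hyk i).trans (hyk j).symm)
  refine ⟨x, y, fun i => g (y i), hxy, fun i j hij => ?_,
    fun i j (hij : g (y i) < g (y j)) => ?_⟩
  · have hupper (i j : ι) (hij : g (y i) = g (y j)) : (y i : ℚ) ≤ (1 + ε) * y j :=
      calc (y i : ℚ) ≤ (1 + ε) ^ (g (y j) + 1) := hij ▸ (hg_lt _).le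
        _ = (1 + ε) * (1 + ε) ^ g (y j) := pow_succ' _ _
        _ ≤ (1 + ε) * y j := by gcongr; exact hg_le _
    rcases le_total (y j : ℚ) (y i) with h | h
    · linarith [abs_of_nonneg (sub_nonneg.2 h), hupper i j hij]
    · have hscale : ε * (y i : ℚ) ≤ ε * y j := by gcongr
      linarith [abs_of_nonpos (sub_nonpos.2 h), hupper j i hij.symm]
  · have hgap : g (y i) + 1 + M ≤ g (y j) := by
      have := Nat.le_of_dvd (Nat.sub_pos_of_lt hij) ((Nat.modEq_iff_dvd' hij.le).1 (hmod i j))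
      omega
    calc (y i : ℚ) = ε * (y i * (1 / ε)) := by field_simp
      _ ≤ ε * ((1 + ε) ^ (g (y i) + 1) * (1 + ε) ^ M) := by
          gcongr
          exact (hg_lt _).le
      _ ≤ ε * y j := by
          rw [← pow_add]
          gcongr
          exact (pow_le_pow_right₀ hε1.le hgap).trans (hg_le _)

/-- The levels `ℓ` of the rows of `F` witness the first entries condition of Hindman and Leader:
for each level `N`, some vector over `ℕ` has constant positive image on the rows of level `N` and
image zero on all rows of lower level. -/
def IsFirstEntriesLevel [Fintype κ] (F : ι → κ → ℚ) (ℓ : ι → ℕ) : Prop :=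
  ∀ N, ∃ d : ℕ, 0 < d ∧ ∃ w : κ → ℕ, ∀ i,
    (ℓ i = N → imageHom F w i = d) ∧ (ℓ i < N → imageHom F w i = 0)

open Matrix in
theorem IPR.exists_level_dotProduct_approx_indicator [Fintype κ] {F : ι → κ → ℚ} (hF : IPR F)
    {ε : ℚ} (hε : 0 < ε) :
    ∃ ℓ : ι → ℕ, ∀ j, ∃ v, 0 ≤ v ∧ ∀ i ∈ {i | ℓ i ≤ ℓ j},
      |F i ⬝ᵥ v - {i | ℓ i = ℓ j}.indicator 1 i| ≤ ε := by
  obtain ⟨x, y, ℓ, hxy, hsame, hlower⟩ := hF.exists_clustered hε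
  have hy (i : ι) : (0 : ℚ) < y i := by exact_mod_cast (y i).pos
  refine ⟨ℓ, fun j => ⟨fun t => (x t : ℚ) / y j, fun t => by positivity, fun i hi => ?_⟩⟩
  have himage : F i ⬝ᵥ (fun t => (x t : ℚ) / y j) = y i / y j := by
    rw [← hxy i, mulVecQ_eq_imageHom, imageHom_apply, Finset.sum_div]
    exact Finset.sum_congr rfl fun t _ => (mul_div_assoc _ _ _).symm
  rw [himage]
  rcases (show ℓ i ≤ ℓ j from hi).lt_or_eq with hlt | heq
  · rw [Set.indicator_of_notMem (s := {i | ℓ i = ℓ j}) hlt.ne, sub_zero,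
      abs_of_pos (div_pos (hy i) (hy j)), div_le_iff₀ (hy j)]
    exact hlower i j hlt
  · rw [Set.indicator_of_mem (s := {i | ℓ i = ℓ j}) heq, Pi.one_apply, div_sub_one (hy j).ne',
      abs_div, abs_of_pos (hy j), div_le_iff₀ (hy j)]
    exact hsame i j heq

open Matrix in
theorem IPR.exists_isFirstEntriesLevel [Finite ι] [Fintype κ] {F : ι → κ → ℚ} (hF : IPR F) :
    ∃ ℓ, IsFirstEntriesLevel F ℓ := by
  obtain ⟨ε, hclosed, hε : 0 < ε⟩ :=
    ((eventually_forall_exists_nonneg_dotProduct_eq_indicator F).and self_mem_nhdsWithin).exists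
  obtain ⟨ℓ, hℓ⟩ := hF.exists_level_dotProduct_approx_indicator hε
  refine ⟨ℓ, fun N => ?_⟩
  by_cases hN : ∃ i, ℓ i = N
  swap
  · exact ⟨1, one_pos, 0, fun i => ⟨fun h => (hN ⟨i, h⟩).elim, by simp⟩⟩
  obtain ⟨j, rfl⟩ := hN
  obtain ⟨v, hv, hFv⟩ := hclosed _ _ (hℓ j)
  obtain ⟨d, hd, w, hw⟩ := exists_pos_nat_forall_mul_eq_natCast hv
  have himage (i : ι) : imageHom F w i = d * F i ⬝ᵥ v := by
    simp only [imageHom_apply, ← hw, dotProduct, Finset.mul_sum, mul_left_comm]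
  refine ⟨d, hd, w, fun i => ⟨fun h => ?_, fun h => ?_⟩⟩
  · rw [himage, hFv i h.le, Set.indicator_of_mem (s := {i | ℓ i = ℓ j}) h, Pi.one_apply, mul_one]
  · rw [himage, hFv i h.le, Set.indicator_of_notMem (s := {i | ℓ i = ℓ j}) h.ne, mul_zero]

end FirstEntries

section IdempotentSums

theorem exists_seq_finsetSum_mem {M : Type*} [AddCommMonoid M] {q : Ultrafilter M} (hq : q + q = q)
    {S : Set M} (hS : S ∈ q) :
    ∃ X : ℕ → M, ∀ α : Finset ℕ, α.Nonempty → ∑ t ∈ α, X t ∈ S := by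
  obtain ⟨X, hX⟩ := Hindman.exists_FS_of_large q hq S hS
  exact ⟨X.get, fun α hα => hX (Hindman.FS.finsetSum X α hα)⟩

theorem eventually_dvd_of_idempotent {p : Ultrafilter ℕ+} (hp : p + p = p) (d : ℕ) [NeZero d] :
    ∀ᶠ n : ℕ+ in p, d ∣ n :=
  (eventually_map_eq_zero_of_idempotent
    ((Nat.castAddMonoidHom (ZMod d) : ℕ →ₙ+ ZMod d).comp PNat.coeAddHom) hp).mono
    fun _ hn => (ZMod.natCast_eq_zero_iff _ _).1 hn

theorem eventually_forall_dvd_of_idempotent {κ : Type*} [Finite κ] {q : Ultrafilter (κ → ℕ)}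
    (hq : q + q = q) (d : ℕ) [NeZero d] : ∀ᶠ x : κ → ℕ in q, ∀ j, d ∣ x j :=
  (eventually_map_eq_zero_of_idempotent ((Nat.castAddMonoidHom (ZMod d)).compLeft κ) hq).mono
    fun _ hx j => (ZMod.natCast_eq_zero_iff _ _).1 (congrFun hx j)

end IdempotentSums

section FiniteMatrices

variable {ι κ : Type} [Fintype κ]

/-- The vectors over `{1, 2, 3, …}` whose image under `F` has all its entries in `P`. -/
def positivePreimage (F : ι → κ → ℚ) (P : Set ℕ+) : Set (κ → ℕ) :=
  {x | (∀ j, 0 < x j) ∧ entriesIn (imageHom F x) P}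

theorem positivePreimage_mono {F : ι → κ → ℚ} : Monotone (positivePreimage F) :=
  fun _ _ hPQ _ hx => ⟨hx.1, fun i => (hx.2 i).imp fun _ h => ⟨hPQ h.1, h.2⟩⟩

theorem mem_ISet_iff {F : ι → κ → ℚ} {p : Ultrafilter ℕ+} :
    p ∈ ISet F ↔ ∀ P ∈ p, (positivePreimage F P).Nonempty := by
  refine forall₂_congr fun P _ => ⟨?_, ?_⟩
  · rintro ⟨x, hx⟩
    exact ⟨fun j => x j, fun j => (x j).pos, mulVecQ_eq_imageHom F x ▸ hx⟩
  · rintro ⟨x, hpos, hx⟩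
    exact ⟨fun j => ⟨x j, hpos j⟩, (mulVecQ_eq_imageHom F fun j => ⟨x j, hpos j⟩) ▸ hx⟩

theorem add_mem_positivePreimage {F : ι → κ → ℚ} {P : Set ℕ+} {x y : κ → ℕ} {m : ι → ℕ+}
    (hx : ∀ i, imageHom F x i = (m i : ℕ))
    (hy : y ∈ positivePreimage F {n | ∀ i, m i + n ∈ P}) : x + y ∈ positivePreimage F P := by
  refine ⟨fun j => Nat.add_pos_right _ (hy.1 j), fun i => ?_⟩
  obtain ⟨n, hn, hyn⟩ := hy.2 i
  exact ⟨m i + n, hn i, by rw [map_add, Pi.add_apply, hx, hyn, PNat.add_coe, Nat.cast_add]⟩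

theorem exists_idempotent_of_mem_ISet [Finite ι] {F : ι → κ → ℚ} {p : Ultrafilter ℕ+}
    (hp : p + p = p) (hF : p ∈ ISet F) :
    ∃ q : Ultrafilter (κ → ℕ), q + q = q ∧ ∀ P ∈ p, positivePreimage F P ∈ q := by
  let L : Set (Ultrafilter (κ → ℕ)) := {q | ∀ P ∈ p, positivePreimage F P ∈ q}
  have hne : L.Nonempty := by
    have : NeBot ((p : Filter ℕ+).lift' (positivePreimage F)) :=
      (lift'_neBot_iff positivePreimage_mono).2 (mem_ISet_iff.1 hF)
    exact ⟨Ultrafilter.of _, fun P hP => Ultrafilter.of_le _ (mem_lift' hP)⟩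
  have hclosed : IsClosed L := by
    simp only [L, Set.ofPred_forall]
    exact isClosed_biInter fun P _ => ultrafilter_isClosed_basic _
  have hadd : ∀ q ∈ L, ∀ r ∈ L, q + r ∈ L := by
    intro q hq r hr P hP
    have hPP : ∀ᶠ m in p, ∀ᶠ n in p, m + n ∈ P :=
      (Ultrafilter.eventually_add p p (· ∈ P)).1 (by rwa [hp])
    refine (Ultrafilter.eventually_add q r (· ∈ positivePreimage F P)).2 ?_
    filter_upwards [hq _ hPP] with x hx
    choose m hm hxm using hx.2
    filter_upwards [hr _ (eventually_all.2 hm)] with y hy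
    exact add_mem_positivePreimage hxm hy
  obtain ⟨q, hqL, hq⟩ := exists_idempotent_in_compact_add_subsemigroup
    Ultrafilter.continuous_add_left L hne hclosed.isCompact hadd
  exact ⟨q, hq, hqL⟩

theorem exists_intCast_eq_imageHom {F : ι → κ → ℚ} {D : ℕ}
    (hD : ∀ i j, ∃ z : ℤ, D * F i j = z) {x : κ → ℕ} (hx : ∀ j, D ∣ x j) (i : ι) :
    ∃ z : ℤ, imageHom F x i = z := by
  choose z hz using hD
  choose y hy using hx
  refine ⟨∑ j, z i j * y j, ?_⟩
  simp only [imageHom_apply, hy, Int.cast_sum, Int.cast_mul, ← hz, Int.cast_natCast, Nat.cast_mul]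
  exact Finset.sum_congr rfl fun j _ => by ring

theorem mem_ISet_succ_level [Finite ι] {F : ι → κ → ℚ} {ℓ : ι → ℕ} (hℓ : IsFirstEntriesLevel F ℓ)
    {p : Ultrafilter ℕ+} (hp : p + p = p) (hK : p ∈ KAdd) {N : ℕ}
    (hN : p ∈ ISet fun i : {i // ℓ i < N} => F i) :
    p ∈ ISet fun i : {i // ℓ i < N + 1} => F i := by
  refine mem_ISet_iff.2 fun C hC => ?_
  obtain ⟨d, hd, w, hw⟩ := hℓ N
  obtain ⟨D, hD, hDF⟩ := exists_pos_nat_forall_mul_eq_intCast fun ij : ι × κ => F ij.1 ij.2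
  have : NeZero d := ⟨hd.ne'⟩
  have : NeZero D := ⟨hD.ne'⟩
  have hCd : C ∩ {n | d ∣ n} ∈ p := inter_mem hC (eventually_dvd_of_idempotent hp d)
  obtain ⟨q, hq, hqN⟩ := exists_idempotent_of_mem_ISet hp hN
  obtain ⟨X, hX⟩ := exists_seq_finsetSum_mem hq <|
    inter_mem (hqN _ hCd) (eventually_forall_dvd_of_idempotent hq D)
  have hXint (t : ℕ) : ∀ i, ∃ z : ℤ, imageHom F (X t) i = z :=
    exists_intCast_eq_imageHom (fun i j => hDF (i, j))
      (by simpa using (hX {t} (Finset.singleton_nonempty t)).2)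
  choose z hz using hXint
  obtain ⟨s, ⟨-, θ, hθ⟩, α, hα, hval⟩ := exists_mem_forall_add_sum_mem hK hCd fun i t => z t i
  obtain ⟨hpos, hlower⟩ := (hX α hα).1
  refine ⟨∑ t ∈ α, X t + θ • w, fun j => Nat.add_pos_left (hpos j) _, fun ⟨i, hi⟩ => ?_⟩
  change ∃ n ∈ C, imageHom F (∑ t ∈ α, X t + θ • w) i = _
  rw [map_add, map_nsmul, Pi.add_apply, Pi.smul_apply]
  rcases Nat.lt_succ_iff_lt_or_eq.1 hi with hlt | heq
  · obtain ⟨n, hn, hnX⟩ := hlower ⟨i, hlt⟩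
    exact ⟨n, hn.1, by rw [(hw i).2 hlt, smul_zero, add_zero]; exact hnX⟩
  · obtain ⟨n, hn, hns⟩ := hval i
    refine ⟨n, hn.1, ?_⟩
    rw [(hw i).1 heq, map_sum, Finset.sum_apply, ← Int.cast_natCast (n : ℕ), hns, hθ]
    simp only [hz]
    push_cast
    ring

end FiniteMatrices

theorem IPR.mem_ISet {ι κ : Type} [Finite ι] [Finite κ] {F : ι → κ → ℚ} (hF : IPR F)
    {p : Ultrafilter ℕ+} (hp : p + p = p) (hK : p ∈ KAdd) : p ∈ ISet F := by
  have := Fintype.ofFinite κ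
  obtain ⟨ℓ, hℓ⟩ := hF.exists_isFirstEntriesLevel
  have hlevels (N : ℕ) : p ∈ ISet fun i : {i // ℓ i < N} => F i := by
    induction N with
    | zero => exact fun P _ => ⟨1, fun i => (Nat.not_lt_zero _ i.2).elim⟩
    | succ N ih => exact mem_ISet_succ_level hℓ hp hK ih
  obtain ⟨b, hb⟩ := (Set.finite_range ℓ).bddAbove
  intro P hP
  obtain ⟨x, hx⟩ := hlevels (b + 1) P hP
  exact ⟨x, fun i => hx ⟨i, Nat.lt_succ_of_le (hb ⟨i, rfl⟩)⟩⟩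

section MillikenTaylorSums

variable {M N : Type*} [AddCommMonoid M] [AddCommMonoid N]

/-- The ultrafilter `a₁ • p + a₂ • p + ⋯ + aₘ • p` attached to a list `[a₁, …, aₘ]`. -/
def iterSum (p : Ultrafilter M) : List ℕ → Ultrafilter M
  | [] => pure 0
  | a :: l => p.map (a • ·) + iterSum p l

theorem eventually_iterSum_nil {p : Ultrafilter M} {Q : M → Prop} :
    (∀ᶠ t in iterSum p [], Q t) ↔ Q 0 :=
  eventually_pure

theorem eventually_iterSum_cons {p : Ultrafilter M} {a : ℕ} {l : List ℕ} {Q : M → Prop} :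
    (∀ᶠ t in iterSum p (a :: l), Q t) ↔ ∀ᶠ y in p, ∀ᶠ t in iterSum p l, Q (a • y + t) :=
  (Ultrafilter.eventually_add (p.map (a • ·)) (iterSum p l) Q).trans eventually_map

theorem eventually_iterSum_append {p : Ultrafilter M} {l l' : List ℕ} {Q : M → Prop} :
    (∀ᶠ t in iterSum p (l ++ l'), Q t) ↔
      ∀ᶠ t in iterSum p l, ∀ᶠ t' in iterSum p l', Q (t + t') := by
  induction l generalizing Q with
  | nil => simp only [List.nil_append, eventually_iterSum_nil, zero_add]
  | cons a l ih => simp only [List.cons_append, eventually_iterSum_cons, ih, add_assoc]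

theorem map_iterSum (φ : M →+ N) (p : Ultrafilter M) (l : List ℕ) :
    (iterSum p l).map φ = iterSum (p.map φ) l := by
  refine Ultrafilter.coe_injective (Filter.ext' fun Q => ?_)
  rw [Ultrafilter.coe_map, eventually_map]
  induction l generalizing Q with
  | nil => simp only [eventually_iterSum_nil, map_zero]
  | cons a l ih =>
    simp only [eventually_iterSum_cons, Ultrafilter.coe_map, eventually_map, ← ih, map_add,
      map_nsmul]

theorem eventually_iterSum_zero_cons {p : Ultrafilter M} {l : List ℕ} {Q : M → Prop} :
    (∀ᶠ t in iterSum p (0 :: l), Q t) ↔ ∀ᶠ t in iterSum p l, Q t := by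
  simp only [eventually_iterSum_cons, zero_smul, zero_add, eventually_const]

theorem iterSum_cons_cons_self {p : Ultrafilter M} (hp : p + p = p) (a : ℕ) (l : List ℕ) :
    iterSum p (a :: a :: l) = iterSum p (a :: l) := by
  have hap : p.map (a • ·) + p.map (a • ·) = p.map (a • ·) :=
    (map_add_ultrafilter (nsmulAddMonoidHom a) p p).symm.trans (congrArg _ hp)
  exact (add_assoc _ _ _).symm.trans (congrArg (· + iterSum p l) hap)

theorem iterSum_append_cons_self {p : Ultrafilter M} (hp : p + p = p) (l : List ℕ) (a : ℕ) :
    iterSum p (l ++ [a] ++ [a]) = iterSum p (l ++ [a]) := by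
  induction l with
  | nil => exact iterSum_cons_cons_self hp a []
  | cons b l ih => exact congrArg (p.map (b • ·) + ·) ih

theorem eventually_iterSum_of_add_closed {p : Ultrafilter M} {P : M → Prop}
    (hadd : ∀ x y, P x → P (x + y)) (hP : ∀ᶠ x in p, P x) {a : List ℕ} (ha : a ≠ [])
    (ha0 : 0 ∉ a) : ∀ᶠ t in iterSum p a, P t := by
  obtain ⟨b, l, rfl⟩ := List.exists_cons_of_ne_nil ha
  obtain ⟨m, rfl⟩ : ∃ m, b = m + 1 := Nat.exists_eq_succ_of_ne_zero fun h => ha0 (by simp [h])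
  refine eventually_iterSum_cons.2 (hP.mono fun x hx => .of_forall fun t => hadd _ _ ?_)
  rw [succ_nsmul']
  exact hadd _ _ hx

theorem exists_seq_invariant {α σ : Type*} {f : Filter α} [f.NeBot] {G : σ → Prop}
    {next : α → σ → Set σ} (hfin : ∀ y st, (next y st).Finite)
    (hnext : ∀ st, G st → ∀ᶠ y in f, ∀ st' ∈ next y st, G st') {U : Set α} (hU : U ∈ f)
    {st₀ : σ} (hst₀ : G st₀) :
    ∃ (y : ℕ → α) (S : ℕ → Set σ), st₀ ∈ S 0 ∧ ∀ n, y n ∈ U ∧ (∀ st ∈ S n, G st) ∧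
      ∀ st ∈ S n, next (y n) st ⊆ S (n + 1) := by
  let Λ := {S : Set σ // S.Finite ∧ ∀ st ∈ S, G st}
  have hchoice (S : Λ) : ∃ y ∈ U, ∀ st ∈ S.1, ∀ st' ∈ next y st, G st' := by
    have hS : ∀ᶠ y in f, ∀ st ∈ S.1, ∀ st' ∈ next y st, G st' :=
      (eventually_all_finite S.2.1).2 fun st hst => hnext st (S.2.2 st hst)
    exact ((show ∀ᶠ y in f, y ∈ U from hU).and hS).exists
  choose y hyU hy using hchoice
  let step (S : Λ) : Λ := ⟨⋃ st ∈ S.1, next (y S) st, S.2.1.biUnion fun st _ => hfin _ st,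
    fun st' hst' => by
      obtain ⟨st, hst, hst'⟩ := Set.mem_iUnion₂.1 hst'
      exact hy S st hst st' hst'⟩
  let S (n : ℕ) : Λ := step^[n] ⟨{st₀}, Set.finite_singleton st₀, by simpa using hst₀⟩
  refine ⟨fun n => y (S n), fun n => (S n).1, rfl, fun n => ⟨hyU _, (S n).2.2, ?_⟩⟩
  have hstep : S (n + 1) = step (S n) := Function.iterate_succ_apply' _ _ _
  change ∀ st ∈ (S n).1, next (y (S n)) st ⊆ (S (n + 1)).1
  rw [hstep]
  exact fun st hst => Set.subset_biUnion_of_mem (u := fun st => next (y (S n)) st) hst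

/-- A state `(L, s)` in the reading of a row against a sequence in `M`: `s` is the sum of the terms
read so far and `L` is the rest of the compressed row, starting with the block being read. The
state is good if, for `p`, the sum can be completed to an element of `Q`, whether the current block
is continued or not. -/
def IsGoodState (p : Ultrafilter M) (Q : Set M) (st : List ℕ × M) : Prop :=
  (∀ᶠ t in iterSum p st.1, st.2 + t ∈ Q) ∧ ∀ᶠ t in iterSum p st.1.tail, st.2 + t ∈ Q

/-- The state after reading a coefficient equal to the head of the list against `y`. -/
def readHead (y : M) (st : List ℕ × M) : List ℕ × M :=
  (st.1, st.2 + st.1.headD 0 • y)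

theorem eventually_isGoodState_readHead {p : Ultrafilter M} (hp : p + p = p) {Q : Set M}
    {st : List ℕ × M} (h : ∀ᶠ t in iterSum p st.1, st.2 + t ∈ Q) :
    ∀ᶠ y in p, IsGoodState p Q (readHead y st) := by
  obtain ⟨_ | ⟨a, l⟩, s⟩ := st
  · exact .of_forall fun y => by simpa [IsGoodState, readHead] using h
  · have hcont := h
    simp only [← iterSum_cons_cons_self hp a l] at hcont
    filter_upwards [eventually_iterSum_cons.1 h, eventually_iterSum_cons.1 hcont] with y hy hy'
    simp only [← add_assoc] at hy hy'
    exact ⟨hy', hy⟩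

/-- The states reachable from `st` on reading one coefficient against `y`: a zero, a continuation of
the current block, or the beginning of the next block. -/
def nextStates (y : M) (st : List ℕ × M) : Set (List ℕ × M) :=
  {st, readHead y st, readHead y (st.1.tail, st.2)}

theorem IsGoodState.eventually_nextStates {p : Ultrafilter M} (hp : p + p = p) {Q : Set M}
    {st : List ℕ × M} (h : IsGoodState p Q st) :
    ∀ᶠ y in p, ∀ st' ∈ nextStates y st, IsGoodState p Q st' := by
  filter_upwards [eventually_isGoodState_readHead hp h.1,
    eventually_isGoodState_readHead (st := (st.1.tail, st.2)) hp h.2] with y hcont hnew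
  rintro st' (rfl | rfl | rfl)
  exacts [h, hcont, hnew]

theorem headD_destutter' {α : Type*} (R : α → α → Prop) [DecidableRel R] (l : List α) (h d : α) :
    (l.destutter' R h).headD d = h := by
  induction l with
  | nil => rfl
  | cons b l ih =>
    rw [List.destutter'_cons]
    split_ifs
    exacts [rfl, ih]

theorem exists_state_mem_of_destutter'_mem {y : ℕ → M} {S : ℕ → Set (List ℕ × M)}
    (hS : ∀ n, ∀ st ∈ S n, nextStates (y n) st ⊆ S (n + 1)) (r : ℕ → ℕ) (k n h : ℕ) (s : M)
    (hst : ((((List.range' n k).map r).filter (· ≠ 0)).destutter' (· ≠ ·) h, s) ∈ S n) :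
    ∃ h', ([h'], s + ∑ j ∈ Finset.Ico n (n + k), r j • y j) ∈ S (n + k) := by
  induction k generalizing n h s with
  | zero => exact ⟨h, by simpa using hst⟩
  | succ k ih =>
    set w := ((List.range' (n + 1) k).map r).filter (· ≠ 0) with hw
    suffices ∃ h', (w.destutter' (· ≠ ·) h', s + r n • y n) ∈ S (n + 1) by
      obtain ⟨h', hmem⟩ := this
      obtain ⟨h'', hend⟩ := ih (n + 1) h' _ hmem
      rw [add_assoc s, Nat.add_right_comm, Nat.add_assoc,
        ← Finset.sum_eq_sum_Ico_succ_bot (by lia) fun j => r j • y j] at hend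
      exact ⟨h'', hend⟩
    have hnext := hS n _ hst
    rw [List.range'_succ, List.map_cons] at hnext
    by_cases hzero : r n = 0
    · rw [List.filter_cons_of_neg (by simpa using hzero), ← hw] at hnext
      exact ⟨h, hnext (.inl (by rw [hzero, zero_smul, add_zero]))⟩
    rw [List.filter_cons_of_pos (by simpa using hzero), ← hw] at hnext
    by_cases hsame : r n = h
    · rw [List.destutter'_cons_neg _ (by simpa using hsame.symm)] at hnext
      exact ⟨h, hnext (.inr (.inl (by rw [readHead, headD_destutter', hsame])))⟩
    · rw [List.destutter'_cons_pos _ (Ne.symm hsame)] at hnext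
      exact ⟨r n, hnext (.inr (.inr (by rw [readHead, List.tail_cons, headD_destutter']; rfl)))⟩

theorem destutter'_filter_ne_zero (l : List ℕ) :
    (l.filter (· ≠ 0)).destutter' (· ≠ ·) 0 = 0 :: compress l := by
  rw [compress]
  generalize hw : l.filter (· ≠ 0) = w
  cases w with
  | nil => rfl
  | cons b w =>
    have hbmem : b ∈ l.filter (· ≠ 0) := hw ▸ List.mem_cons_self
    have hb : b ≠ 0 := of_decide_eq_true (List.mem_filter.1 hbmem).2
    rw [List.destutter'_cons_pos _ hb.symm, List.destutter_cons']

theorem exists_seq_forall_rowCompressedTo {p : Ultrafilter M} (hp : p + p = p) {U : Set M}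
    (hU : U ∈ p) {a : List ℕ} {Q : Set M} (hQ : Q ∈ iterSum p a) :
    ∃ y : ℕ → M, (∀ n, y n ∈ U) ∧ ∀ r, rowCompressedTo r a → ∑ᶠ j, r j • y j ∈ Q := by
  have hstart : IsGoodState p Q (0 :: a, 0) := by
    simpa [IsGoodState, eventually_iterSum_zero_cons] using hQ
  obtain ⟨y, S, hstart_mem, hS⟩ := exists_seq_invariant (next := nextStates)
    (fun y st => Set.toFinite {st, readHead y st, readHead y (st.1.tail, st.2)})
    (fun st hst => hst.eventually_nextStates hp) hU hstart
  refine ⟨y, fun n => (hS n).1, ?_⟩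
  rintro r ⟨N, hN, rfl⟩
  rw [← destutter'_filter_ne_zero, List.range_eq_range'] at hstart_mem
  obtain ⟨h, hend⟩ := exists_state_mem_of_destutter'_mem (fun n => (hS n).2.2) r N 0 0 0 hstart_mem
  have hsum : ∑ᶠ j, r j • y j = ∑ j ∈ Finset.Ico 0 (0 + N), r j • y j :=
    finsum_eq_sum_of_support_subset _ fun j hj => by
      have : j < N := not_le.1 fun h => hj (by simp [hN j h])
      simpa using this
  simpa [hsum, eventually_iterSum_nil] using ((hS _).2.1 _ hend).2

end MillikenTaylorSums

section SubtractedMatrices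

theorem map_imageHom_eq_of_positivePreimage_mem {ι κ : Type} [Fintype κ] {F : ι → κ → ℚ}
    {p : Ultrafilter ℕ+} {q : Ultrafilter (κ → ℕ)} (hq : ∀ P ∈ p, positivePreimage F P ∈ q)
    (i : ι) :
    q.map (imageHom F · i) = (p.map ((↑) : ℕ+ → ℕ)).map (Nat.castAddMonoidHom ℚ) := by
  refine Ultrafilter.eq_of_le fun P hP => Ultrafilter.mem_map.2 <|
    mem_of_superset (hq _ hP) fun x hx => ?_
  obtain ⟨n, hn, hxn⟩ := hx.2 i
  exact Set.mem_of_eq_of_mem (s := P) hxn hn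

theorem eventually_iterSum_imageHom {ι κ : Type} [Finite ι] [Fintype κ] {F : ι → κ → ℚ}
    {p : Ultrafilter ℕ+} {q : Ultrafilter (κ → ℕ)} (hq : ∀ P ∈ p, positivePreimage F P ∈ q)
    {a : List ℕ} {Q : Set ℕ} (hQ : Q ∈ iterSum (p.map (↑)) a) :
    ∀ᶠ v in iterSum q a, ∀ i, ∃ n ∈ Q, imageHom F v i = n := by
  refine eventually_all.2 fun i => ?_
  have hmap : (iterSum q a).map ((Pi.evalAddMonoidHom _ i).comp (imageHom F)) =
      (iterSum (p.map (↑)) a).map (Nat.castAddMonoidHom ℚ) := by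
    rw [map_iterSum, map_iterSum, ← map_imageHom_eq_of_positivePreimage_mem hq i]
    rfl
  have hmem : {t : ℚ | ∃ n ∈ Q, t = (n : ℕ)} ∈
      (iterSum (p.map (↑)) a).map (Nat.castAddMonoidHom ℚ) :=
    Ultrafilter.mem_map.2 <| mem_of_superset hQ fun n hn => ⟨n, hn, rfl⟩
  rwa [← hmap] at hmem

theorem eventually_iterSum_imageHom_add {ι κ : Type} [Finite ι] [Fintype κ] {F : ι → κ → ℚ}
    {p : Ultrafilter ℕ+} {q : Ultrafilter (κ → ℕ)} (hq : q + q = q)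
    (hqp : ∀ P ∈ p, positivePreimage F P ∈ q) {l : List ℕ} {e : ℕ} {Q : Set ℕ}
    (hQ : Q ∈ iterSum (p.map (↑)) (l ++ [e])) :
    ∀ᶠ v in iterSum q (l ++ [e]), ∀ᶠ z : ℕ+ in p, ∀ i,
      ∃ n ∈ Q, imageHom F v i + e • ((z : ℕ) : ℚ) = n := by
  have habsorb : ∀ᶠ v in iterSum q (l ++ [e]), ∀ᶠ x in q, ∀ i,
      ∃ n ∈ Q, imageHom F (v + e • x) i = n := by
    have h := eventually_iterSum_imageHom hqp hQ
    rw [← iterSum_append_cons_self hq, eventually_iterSum_append] at h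
    simpa only [eventually_iterSum_cons, eventually_iterSum_nil, add_zero] using h
  refine habsorb.mono fun v hv => eventually_all.2 fun i => ?_
  have hvi : ∀ᶠ t in q.map (imageHom F · i), ∃ n ∈ Q, imageHom F v i + e • t = n := by
    refine Ultrafilter.mem_map.2 (hv.mono fun x hx => ?_)
    simp only [map_add, map_nsmul, Pi.add_apply, Pi.smul_apply] at hx
    exact hx i
  rwa [map_imageHom_eq_of_positivePreimage_mem hqp i] at hvi

theorem IPR.exists_isCentralAdd_add {ι κ : Type} [Finite ι] [Finite κ] {F : ι → κ → ℚ}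
    (hF : IPR F) {p : Ultrafilter ℕ+} (hp : p + p = p) (hK : p ∈ KAdd) {a : List ℕ} (ha : a ≠ [])
    (ha0 : 0 ∉ a) {P : Set ℕ+} (hP : ((↑) '' P : Set ℕ) ∈ iterSum (p.map (↑)) a) :
    ∃ v : κ → ℕ+, IsCentralAdd {m | entriesIn (fun i => mulVecQ F v i + (m : ℕ)) P} := by
  have := Fintype.ofFinite κ
  obtain ⟨q, hq, hqp⟩ := exists_idempotent_of_mem_ISet hp (hF.mem_ISet hp hK)
  have hpos : ∀ᶠ v : κ → ℕ in iterSum q a, ∀ j, 0 < v j :=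
    eventually_iterSum_of_add_closed (P := fun v : κ → ℕ => ∀ j, 0 < v j)
      (fun x _ (h : ∀ j, 0 < x j) j => Nat.add_pos_left (h j) _)
      (mem_of_superset (hqp _ univ_mem) fun _ h => h.1) ha ha0
  obtain ⟨l, e, rfl⟩ := (List.eq_nil_or_concat' a).resolve_left ha
  lift e to ℕ+ using Nat.pos_of_ne_zero fun h => ha0 (by simp [h])
  obtain ⟨v, hv, hvpos⟩ := ((eventually_iterSum_imageHom_add hq hqp hP).and hpos).exists
  lift v to κ → ℕ+ using hvpos
  refine ⟨v, p.map (AddHom.mulLeft e),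
    (map_add_ultrafilter _ p p).symm.trans (congrArg _ hp), map_mul_mem_KAdd hK _,
    Ultrafilter.mem_map.2 (hv.mono fun z hz i => ?_)⟩
  obtain ⟨_, ⟨n, hn, rfl⟩, hzn⟩ := hz i
  exact ⟨n, hn, by simpa [mulVecQ_eq_imageHom] using hzn⟩

theorem finsum_sum_type {α β M : Type*} [AddCommMonoid M] {g : α ⊕ β → M}
    (hg : g.support.Finite) : ∑ᶠ s, g s = ∑ᶠ a, g (.inl a) + ∑ᶠ b, g (.inr b) := by
  rw [← finsum_mem_univ, ← Set.range_inl_union_range_inr,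
    finsum_mem_union' Set.isCompl_range_inl_range_inr.disjoint (hg.inter_of_right _)
      (hg.inter_of_right _),
    finsum_mem_range Sum.inl_injective, finsum_mem_range Sum.inr_injective]

theorem bijective_sumElim_columns (n k : ℕ) : Function.Bijective
    (Sum.elim (fun t : Fin k => n + t) fun j => if j < n then j else j + k) := by
  refine ⟨?_, fun m => ?_⟩
  · rintro (t | i) (t' | j) h <;> simp only [Sum.elim_inl, Sum.elim_inr] at h <;> grind
  · rcases lt_or_ge m n with hm | hm
    · exact ⟨.inr m, if_pos hm⟩
    rcases lt_or_ge m (n + k) with hmk | hmk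
    · exact ⟨.inl ⟨m - n, by lia⟩, Nat.add_sub_cancel' hm⟩
    · exact ⟨.inr (m - k), (if_neg (by lia)).trans (Nat.sub_add_cancel (by lia))⟩

theorem exists_mulVecQ_eq_add_mulVecQ {ι : Type} {A : ι → ℕ → ℚ}
    (hA : ∀ i, {j | A i j ≠ 0}.Finite) (n k : ℕ) (v : Fin k → ℕ+) (w : ℕ → ℕ+) :
    ∃ x : ℕ → ℕ+, ∀ i, mulVecQ A x i = mulVecQ (fun i (t : Fin k) => A i (n + t)) v i +
      mulVecQ (fun i j => A i (if j < n then j else j + k)) w i := by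
  let e := Equiv.ofBijective _ (bijective_sumElim_columns n k)
  refine ⟨Sum.elim v w ∘ e.symm, fun i => ?_⟩
  have hfin : (Function.support fun s => A i (e s) * ((Sum.elim v w s : ℕ+) : ℕ)).Finite :=
    ((hA i).preimage e.injective.injOn).subset fun s hs => left_ne_zero_of_mul hs
  unfold mulVecQ
  rw [← finsum_comp_equiv e]
  simp only [Function.comp_apply, Equiv.symm_apply_apply]
  exact finsum_sum_type hfin

theorem SubtractedCentrallyIPR.exists_entriesIn {A : ℕ → ℕ → ℚ} (hA : SubtractedCentrallyIPR A)
    {p : Ultrafilter ℕ+} (hp : p + p = p) (hK : p ∈ KAdd) {a : List ℕ} (ha : a ≠ [])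
    (ha0 : 0 ∉ a) {P : Set ℕ+} (hP : ((↑) '' P : Set ℕ) ∈ iterSum (p.map (↑)) a) :
    ∃ x : ℕ → ℕ+, entriesIn (mulVecQ A x) P := by
  obtain ⟨-, hrow, n, k, -, ⟨u, F, hF, hrange⟩, hrest⟩ := hA
  obtain ⟨v, hv⟩ := hF.exists_isCentralAdd_add hp hK ha ha0 hP
  obtain ⟨w, hw⟩ := hrest _ hv
  obtain ⟨x, hx⟩ := exists_mulVecQ_eq_add_mulVecQ hrow n k v w
  refine ⟨x, fun i => ?_⟩
  obtain ⟨i', hi'⟩ : (fun t : Fin k => A i (n + t)) ∈ Set.range F := hrange ▸ ⟨i, rfl⟩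
  obtain ⟨m, hm, hwm⟩ := hw i
  obtain ⟨m', hm', hvm⟩ := hm i'
  refine ⟨m', hm', ?_⟩
  rw [hx, hwm, ← hvm]
  simp only [mulVecQ, hi']

end SubtractedMatrices

theorem zero_notMem_of_compress_eq {a : List ℕ} (ha : compress a = a) : 0 ∉ a := by
  intro h0
  rw [← ha] at h0
  exact of_decide_eq_true (List.mem_filter.1 ((List.destutter_sublist _ _).mem h0)).2 rfl

theorem eventually_map_coe_pos (p : Ultrafilter ℕ+) : ∀ᶠ n : ℕ in p.map PNat.val, 0 < n :=
  Ultrafilter.mem_map.2 (univ_mem' PNat.pos)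

theorem exists_image_mem_iterSum_map_coe (p : Ultrafilter ℕ+) {a : List ℕ} (ha : a ≠ [])
    (ha0 : 0 ∉ a) {α : Type*} [Finite α] (c : ℕ+ → α) :
    ∃ k, ((↑) '' {n | c n = k} : Set ℕ) ∈ iterSum (p.map (↑)) a := by
  have hpos : ∀ᶠ t : ℕ in iterSum (p.map PNat.val) a, 0 < t :=
    eventually_iterSum_of_add_closed (fun _ y hx => Nat.add_pos_left hx y)
      (eventually_map_coe_pos p) ha ha0
  exact Ultrafilter.eventually_exists_iff.1
    (hpos.mono fun t ht => ⟨c ⟨t, ht⟩, ⟨t, ht⟩, rfl, rfl⟩)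

/-- Theorem 2.16: if `A` is subtracted centrally image partition
regular and `B` is a Milliken–Taylor matrix, then the diagonal sum `(A 0; 0 B)` is
image partition regular: for every finite coloring of `ℕ` there are `x, y ∈ ℕ^ω`
with all entries of `Ax` and all entries of `By` in one and the same color class. -/
theorem stmt_8 (A : ℕ → ℕ → ℚ) (B : ℕ → ℕ → ℕ)
    (hA : SubtractedCentrallyIPR A) (hB : MillikenTaylor B) :
    ∀ (r : ℕ) (c : ℕ+ → Fin r), ∃ (k : Fin r) (x y : ℕ → ℕ+),
      entriesIn (mulVecQ A x) {n | c n = k} ∧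
      (∀ i, ∃ n : ℕ+, c n = k ∧ (∑ᶠ j, B i j * (y j : ℕ)) = (n : ℕ)) := by
  obtain ⟨p, hp, hK⟩ := exists_idempotent_mem_KAdd
  obtain ⟨-, a, ha, hcomp, hrow, -⟩ := hB
  have ha0 : 0 ∉ a := zero_notMem_of_compress_eq hcomp
  have hpN : p.map PNat.val + p.map PNat.val = p.map PNat.val :=
    (map_add_ultrafilter PNat.coeAddHom p p).symm.trans (congrArg _ hp)
  intro r c
  obtain ⟨k, hk⟩ := exists_image_mem_iterSum_map_coe p ha ha0 c
  obtain ⟨x, hx⟩ := hA.exists_entriesIn hp hK ha ha0 hk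
  obtain ⟨y, hypos, hy⟩ := exists_seq_forall_rowCompressedTo hpN (eventually_map_coe_pos p) hk
  lift y to ℕ → ℕ+ using hypos
  refine ⟨k, x, y, hx, fun i => ?_⟩
  obtain ⟨n, hn, hny⟩ := hy _ (hrow i)
  exact ⟨n, hn, hny.symm⟩
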